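/- arXiv:2310.18612 — 3 statements merged into one kernel-verified Lean document; each statement's English description precedes it below -/
import Mathlib

section
/- Under the one-dimensional grid setup, if g : [a,b] → ℝ is monotonic on every subinterval [x_i, x_{i+1}] for 0 ≤ i ≤ N−1, then ‖g‖₁ ≤ √2 ‖g‖₀. -/
/-- The discrete trapezoidal-rule grid norm on `[a,b]` with `n` uniform subintervals. -/
noncomputable def gridNorm (a b : ℝ) (n : ℕ) (g : ℝ → ℝ) : ℝ :=
  Real.sqrt (((b - a) / n / 2) *
    ∑ j ∈ Finset.range n,
      ((g (a + j * ((b - a) / n))) ^ 2 + (g (a + (j + 1) * ((b - a) / n))) ^ 2))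

/-!
The square of a grid norm of `g` is a composite trapezoidal sum of `g ^ 2`, and the trapezoidal sum
on the test grid splits into the trapezoidal sums over the training cells. A value of `g` in a cell
lies between the two endpoint values, so by convexity of the square `g ^ 2` is at most
`g (x i) ^ 2 + g (x (i + 1)) ^ 2` there. The trapezoidal sum over the cell is therefore at most
`Δx * (g (x i) ^ 2 + g (x (i + 1)) ^ 2)`, which is twice the single trapezoid of the training grid.
-/

open Finset

section Trapezoidal

variable {f : ℝ → ℝ} {m n : ℕ} {a b h C : ℝ}

lemma trapezoidal_integral_eq_sum_one (hn : 0 < n) :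
    trapezoidal_integral f n a b =
      ∑ j ∈ range n, trapezoidal_integral f 1
        (a + j * ((b - a) / n)) (a + (j + 1) * ((b - a) / n)) := by
  have hn' : (n : ℝ) ≠ 0 := Nat.cast_ne_zero.mpr hn.ne'
  rw [sum_trapezoidal_integral_adjacent_intervals hn, mul_div_cancel₀ _ hn', add_sub_cancel]

lemma trapezoidal_integral_eq_mul_sum (hn : 0 < n) :
    trapezoidal_integral f n a b =
      (b - a) / n / 2 * ∑ j ∈ range n,
        (f (a + j * ((b - a) / n)) + f (a + (j + 1) * ((b - a) / n))) := by
  simp only [trapezoidal_integral_eq_sum_one hn, trapezoidal_integral_one,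
    add_sub_add_left_eq_sub, ← sub_mul, add_sub_cancel_left, one_mul, mul_sum]

lemma trapezoidal_integral_add_adjacent_intervals (hm : 0 < m) (hn : 0 < n) :
    trapezoidal_integral f m a (a + m * h) +
        trapezoidal_integral f n (a + m * h) (a + m * h + n * h) =
      trapezoidal_integral f (m + n) a (a + (m + n : ℕ) * h) := by
  rw [← sum_trapezoidal_integral_adjacent_intervals hm,
    ← sum_trapezoidal_integral_adjacent_intervals hn,
    ← sum_trapezoidal_integral_adjacent_intervals (Nat.add_pos_left hm n), sum_range_add]
  congr! 3 <;> push_cast <;> ring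

lemma trapezoidal_integral_mul_eq_sum (hm : 0 < m) (hn : 0 < n) :
    trapezoidal_integral f (m * n) a (a + n * h) =
      ∑ i ∈ range n, trapezoidal_integral f m (a + i * h) (a + (i + 1) * h) := by
  have hm' : (m : ℝ) ≠ 0 := Nat.cast_ne_zero.mpr hm.ne'
  obtain ⟨k, rfl⟩ : ∃ k, h = m * k := ⟨h / m, (mul_div_cancel₀ h hm').symm⟩
  induction n, hn using Nat.le_induction with
  | base => simp
  | succ n hn ih =>
    have hsplit := trapezoidal_integral_add_adjacent_intervals (f := f) (a := a) (h := k)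
      (Nat.mul_pos hm hn) hm
    rw [sum_range_succ, ← ih, Nat.mul_succ]
    convert hsplit.symm using 2 <;> push_cast <;> ring_nf

lemma trapezoidal_integral_le_mul (hn : 0 < n) (hab : a ≤ b) (hf : ∀ x ∈ Set.Icc a b, f x ≤ C) :
    trapezoidal_integral f n a b ≤ (b - a) * C := by
  have hn' : (0 : ℝ) < n := Nat.cast_pos.mpr hn
  have hstep : 0 ≤ (b - a) / n := div_nonneg (sub_nonneg.mpr hab) hn'.le
  have hnode : ∀ t : ℝ, 0 ≤ t → t ≤ n → f (a + t * ((b - a) / n)) ≤ C := by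
    intro t ht₀ htn
    refine hf _ ⟨le_add_of_nonneg_right (mul_nonneg ht₀ hstep), ?_⟩
    calc a + t * ((b - a) / n) ≤ a + n * ((b - a) / n) := by gcongr
      _ = b := by rw [mul_div_cancel₀ _ hn'.ne', add_sub_cancel]
  calc trapezoidal_integral f n a b
      = (b - a) / n / 2 * ∑ j ∈ range n,
          (f (a + j * ((b - a) / n)) + f (a + (j + 1) * ((b - a) / n))) :=
        trapezoidal_integral_eq_mul_sum hn
    _ ≤ (b - a) / n / 2 * ∑ _j ∈ range n, (C + C) := by
        gcongr with j hj
        · exact hnode j j.cast_nonneg (mod_cast (mem_range.mp hj).le)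
        · exact hnode (j + 1) (by positivity) (mod_cast mem_range.mp hj)
    _ = (b - a) * C := by
        rw [sum_const, card_range, nsmul_eq_mul]
        field

lemma trapezoidal_integral_le_two_mul_one (hn : 0 < n) (hab : a ≤ b)
    (hf : ∀ x ∈ Set.Icc a b, f x ≤ f a + f b) :
    trapezoidal_integral f n a b ≤ 2 * trapezoidal_integral f 1 a b :=
  calc trapezoidal_integral f n a b ≤ (b - a) * (f a + f b) :=
        trapezoidal_integral_le_mul hn hab hf
    _ = 2 * trapezoidal_integral f 1 a b := by
        rw [trapezoidal_integral_one]
        ring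

lemma trapezoidal_integral_mul_le_two_mul (hm : 0 < m) (hn : 0 < n) (hab : a ≤ b)
    (hf : ∀ i < n, ∀ x ∈ Set.Icc (a + i * ((b - a) / n)) (a + (i + 1) * ((b - a) / n)),
      f x ≤ f (a + i * ((b - a) / n)) + f (a + (i + 1) * ((b - a) / n))) :
    trapezoidal_integral f (m * n) a b ≤ 2 * trapezoidal_integral f n a b := by
  have hn' : (n : ℝ) ≠ 0 := Nat.cast_ne_zero.mpr hn.ne'
  have hstep : 0 ≤ (b - a) / n := div_nonneg (sub_nonneg.mpr hab) n.cast_nonneg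
  have hb : a + n * ((b - a) / n) = b := by rw [mul_div_cancel₀ _ hn', add_sub_cancel]
  have hsplit := trapezoidal_integral_mul_eq_sum (f := f) (a := a) (h := (b - a) / n) hm hn
  rw [hb] at hsplit
  rw [hsplit, trapezoidal_integral_eq_sum_one hn, mul_sum]
  exact sum_le_sum fun i hi =>
    trapezoidal_integral_le_two_mul_one hm (by linarith [hstep]) (hf i (mem_range.mp hi))

end Trapezoidal

lemma gridNorm_eq_sqrt_trapezoidal_integral {n : ℕ} (hn : 0 < n) (a b : ℝ) (g : ℝ → ℝ) :
    gridNorm a b n g = √(trapezoidal_integral (fun x => g x ^ 2) n a b) := by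
  rw [gridNorm, trapezoidal_integral_eq_mul_sum hn]

lemma mapsTo_uIcc_of_monotoneOn_or_antitoneOn {α β : Type*} [Preorder α] [Lattice β]
    {f : α → β} {a b : α}
    (hf : MonotoneOn f (Set.Icc a b) ∨ AntitoneOn f (Set.Icc a b)) :
    Set.MapsTo f (Set.Icc a b) (Set.uIcc (f a) (f b)) := by
  intro x hx
  have ha : a ∈ Set.Icc a b := Set.left_mem_Icc.mpr (hx.1.trans hx.2)
  have hb : b ∈ Set.Icc a b := Set.right_mem_Icc.mpr (hx.1.trans hx.2)
  rcases hf with hmono | hanti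
  · exact Set.mem_uIcc_of_le (hmono ha hx hx.1) (hmono hx hb hx.2)
  · exact Set.mem_uIcc_of_ge (hanti hx hb hx.2) (hanti ha hx hx.1)

lemma sq_le_sq_add_sq_of_mem_uIcc {x y z : ℝ} (hz : z ∈ Set.uIcc x y) :
    z ^ 2 ≤ x ^ 2 + y ^ 2 :=
  calc z ^ 2 ≤ max (x ^ 2) (y ^ 2) :=
        even_two.convexOn_pow.le_max_of_mem_segment (Set.mem_univ x) (Set.mem_univ y)
          (segment_eq_uIcc x y ▸ hz)
    _ ≤ x ^ 2 + y ^ 2 := max_le_add_of_nonneg (sq_nonneg x) (sq_nonneg y)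

theorem stmt1_general {a b : ℝ} (hab : a ≤ b) {N τ : ℕ} (hN : 0 < N) (hτ : 0 < τ) {g : ℝ → ℝ}
    (hg : ∀ i < N, ∀ x ∈ Set.Icc (a + i * ((b - a) / N)) (a + (i + 1) * ((b - a) / N)),
      g x ^ 2 ≤ g (a + i * ((b - a) / N)) ^ 2 + g (a + (i + 1) * ((b - a) / N)) ^ 2) :
    gridNorm a b (τ * N) g ≤ √2 * gridNorm a b N g := by
  rw [gridNorm_eq_sqrt_trapezoidal_integral (Nat.mul_pos hτ hN),
    gridNorm_eq_sqrt_trapezoidal_integral hN, ← Real.sqrt_mul zero_le_two]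
  exact Real.sqrt_le_sqrt (trapezoidal_integral_mul_le_two_mul hτ hN hab hg)

/-- If `g` is monotonic (increasing or decreasing) on every training subinterval
`[x_i, x_{i+1}]`, then `‖g‖₁ ≤ √2 ‖g‖₀`. -/
theorem stmt1 (a b : ℝ) (hab : a < b) (N τ : ℕ) (hN : 1 ≤ N) (hτ : 1 < τ)
    (g : ℝ → ℝ)
    (hmono : ∀ i < N,
      MonotoneOn g (Set.Icc (a + i * ((b - a) / N)) (a + (i + 1) * ((b - a) / N))) ∨
      AntitoneOn g (Set.Icc (a + i * ((b - a) / N)) (a + (i + 1) * ((b - a) / N)))) :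
    gridNorm a b (τ * N) g ≤ Real.sqrt 2 * gridNorm a b N g :=
  stmt1_general hab.le hN (zero_lt_one.trans hτ) fun i hi _ hx =>
    sq_le_sq_add_sq_of_mem_uIcc (mapsTo_uIcc_of_monotoneOn_or_antitoneOn (hmono i hi) hx)
end

section
/- Under the one-dimensional grid setup, let f, f_CK, f_NTK : [a,b] → ℝ and let 0 ≤ β < 1 be such that ‖f − f_NTK‖₀ ≤ ‖f − f_CK‖₀ ≤ (1/(1−β)) ‖f − f_NTK‖₀, and suppose that both residuals f − f_CK and f − f_NTK are monotonic on every subinterval [x_i, x_{i+1}] for 0 ≤ i ≤ N−1. Then (2τ)^{−1/2} ‖f − f_NTK‖₁ ≤ ‖f − f_CK‖₁ ≤ (√(2τ)/(1−β)) ‖f − f_NTK‖₁. -/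
/-!
Each training interval is the union of `τ` test intervals. The trapezoidal sum over those test
intervals dominates the contribution of the two endpoints, so refining the grid decreases the norm
at most by the factor `√τ` coming from the step size. Conversely, if `|g|` is quasiconvex on a
training interval, as it is when `g` is monotone there, then the square of every test sample is at
most the sum of the squares at the two endpoints, so refining the grid increases the norm of `g` at
most by the factor `√2`. The two estimates sandwich any comparison made on the training grid.
-/

section Quasiconvex

theorem quasiconvexOn_abs_of_quasilinearOn {𝕜 E β : Type*} [Semiring 𝕜] [PartialOrder 𝕜]
    [AddCommMonoid E] [SMul 𝕜 E] [AddCommGroup β] [LinearOrder β] [IsOrderedAddMonoid β]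
    {s : Set E} {g : E → β} (hg : QuasilinearOn 𝕜 s g) : QuasiconvexOn 𝕜 s |g| :=
  hg.1.sup (hg.2.antitone_comp (g := Neg.neg) fun _ _ => neg_le_neg)

variable {𝕜 β : Type*} [Field 𝕜] [LinearOrder 𝕜] [IsStrictOrderedRing 𝕜]

theorem quasiconvexOn_abs_of_monotoneOn_or_antitoneOn [AddCommGroup β] [LinearOrder β]
    [IsOrderedAddMonoid β] {g : 𝕜 → β} {s : Set 𝕜} (hs : Convex 𝕜 s)
    (hg : MonotoneOn g s ∨ AntitoneOn g s) : QuasiconvexOn 𝕜 s |g| :=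
  quasiconvexOn_abs_of_quasilinearOn <|
    hg.elim (fun h => h.quasilinearOn hs) (fun h => h.quasilinearOn hs)

theorem le_max_of_quasiconvexOn_Icc [LinearOrder β] {g : 𝕜 → β} {x y z : 𝕜}
    (hg : QuasiconvexOn 𝕜 (Set.Icc x z) g) (hy : y ∈ Set.Icc x z) : g y ≤ max (g x) (g z) :=
  have hxz : x ≤ z := hy.1.trans hy.2
  ((hg (max (g x) (g z))).ordConnected.out ⟨Set.left_mem_Icc.mpr hxz, le_max_left _ _⟩
    ⟨Set.right_mem_Icc.mpr hxz, le_max_right _ _⟩ hy).2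

theorem sq_le_sq_add_sq_of_quasiconvexOn_abs {g : 𝕜 → 𝕜} {x y z : 𝕜}
    (hg : QuasiconvexOn 𝕜 (Set.Icc x z) |g|) (hy : y ∈ Set.Icc x z) :
    g y ^ 2 ≤ g x ^ 2 + g z ^ 2 := by
  rcases le_max_iff.mp (le_max_of_quasiconvexOn_Icc hg hy) with h | h
  · exact le_add_of_le_of_nonneg (sq_le_sq.mpr h) (sq_nonneg _)
  · exact le_add_of_nonneg_of_le (sq_nonneg _) (sq_le_sq.mpr h)

end Quasiconvex

section BlockSums

open Finset

variable {M : Type*} [AddCommMonoid M]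

theorem sum_range_mul_eq_sum_sum (w : ℕ → M) (m n : ℕ) :
    ∑ j ∈ range (m * n), w j = ∑ i ∈ range n, ∑ k ∈ range m, w (m * i + k) := by
  induction n with
  | zero => simp
  | succ n ih => rw [Nat.mul_succ, sum_range_add, ih, sum_range_succ]

variable [PartialOrder M] [IsOrderedAddMonoid M] {w : ℕ → M} {m : ℕ}

theorem add_le_sum_range_add_succ (hw : ∀ j, 0 ≤ w j) (hm : 1 ≤ m) :
    w 0 + w m ≤ ∑ k ∈ range m, (w k + w (k + 1)) := by
  obtain ⟨l, rfl⟩ := Nat.exists_eq_add_of_le' hm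
  rw [sum_add_distrib]
  exact add_le_add (single_le_sum (fun k _ => hw k) (mem_range.mpr l.succ_pos))
    (single_le_sum (f := fun k => w (k + 1)) (fun k _ => hw (k + 1)) (self_mem_range_succ l))

theorem sum_range_endpoints_le_sum_range_mul (hw : ∀ j, 0 ≤ w j) (hm : 1 ≤ m) (n : ℕ) :
    ∑ i ∈ range n, (w (m * i) + w (m * (i + 1))) ≤ ∑ j ∈ range (m * n), (w j + w (j + 1)) := by
  rw [sum_range_mul_eq_sum_sum]
  exact sum_le_sum fun i _ =>
    add_le_sum_range_add_succ (w := fun k => w (m * i + k)) (fun k => hw (m * i + k)) hm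

theorem sum_range_mul_le_nsmul_sum_range_endpoints {n : ℕ}
    (hw : ∀ i < n, ∀ k ≤ m, w (m * i + k) ≤ w (m * i) + w (m * (i + 1))) :
    ∑ j ∈ range (m * n), (w j + w (j + 1)) ≤
      (m * 2) • ∑ i ∈ range n, (w (m * i) + w (m * (i + 1))) := by
  rw [sum_range_mul_eq_sum_sum, smul_sum]
  refine sum_le_sum fun i hi => ?_
  have hblock := hw i (mem_range.mp hi)
  have hterm : ∀ k ∈ range m,
      w (m * i + k) + w (m * i + k + 1) ≤ 2 • (w (m * i) + w (m * (i + 1))) := fun k hk => by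
    rw [two_nsmul]
    exact add_le_add (hblock k (mem_range.mp hk).le) (hblock (k + 1) (mem_range.mp hk))
  simpa only [card_range, mul_nsmul'] using sum_le_card_nsmul _ _ _ hterm

end BlockSums

/-- The `j`-th node `a + j (b - a) / n` of the uniform grid with `n` subintervals of `[a, b]`: the
training nodes are `x_j = gridNode a b N j` and the test nodes `y_j = gridNode a b (τ * N) j`. -/
noncomputable def gridNode (a b : ℝ) (n j : ℕ) : ℝ :=
  a + j * ((b - a) / n)

section Refinement

open Finset

variable {a b : ℝ} {N τ : ℕ} {g h : ℝ → ℝ}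

theorem gridStep_nonneg (hab : a ≤ b) (n : ℕ) : 0 ≤ (b - a) / n :=
  div_nonneg (sub_nonneg.mpr hab) n.cast_nonneg

theorem gridNode_mono (hab : a ≤ b) (n : ℕ) : Monotone (gridNode a b n) := fun _ _ hij =>
  add_le_add_right (mul_le_mul_of_nonneg_right (Nat.cast_le.mpr hij) (gridStep_nonneg hab n)) a

theorem mul_gridStep_mul (a b : ℝ) (N : ℕ) (hτ : 1 ≤ τ) :
    τ * ((b - a) / (τ * N : ℕ)) = (b - a) / N := by
  have hτ' : (τ : ℝ) ≠ 0 := by positivity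
  rw [Nat.cast_mul, ← mul_div_assoc, mul_div_mul_left _ _ hτ']

theorem gridNode_mul_mul (a b : ℝ) (N : ℕ) (hτ : 1 ≤ τ) (i : ℕ) :
    gridNode a b (τ * N) (τ * i) = gridNode a b N i := by
  rw [gridNode, gridNode, ← mul_gridStep_mul a b N hτ, Nat.cast_mul τ i]
  ring

theorem gridNode_mul_add_mem_Icc (hab : a ≤ b) (N : ℕ) (hτ : 1 ≤ τ) (i : ℕ) {k : ℕ}
    (hk : k ≤ τ) :
    gridNode a b (τ * N) (τ * i + k) ∈ Set.Icc (gridNode a b N i) (gridNode a b N (i + 1)) := by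
  rw [← gridNode_mul_mul a b N hτ i, ← gridNode_mul_mul a b N hτ (i + 1), mul_add_one]
  exact ⟨gridNode_mono hab _ (Nat.le_add_right _ k), gridNode_mono hab _ (by gcongr)⟩

theorem gridNorm_eq_sqrt_sum_gridNode (a b : ℝ) (n : ℕ) (g : ℝ → ℝ) :
    gridNorm a b n g = √(((b - a) / n / 2) *
      ∑ j ∈ range n, (g (gridNode a b n j) ^ 2 + g (gridNode a b n (j + 1)) ^ 2)) := by
  simp only [gridNorm, gridNode, Nat.cast_succ]

theorem gridNorm_le_sqrt_mul_gridNorm_mul (hab : a ≤ b) (N : ℕ) (hτ : 1 ≤ τ) (g : ℝ → ℝ) :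
    gridNorm a b N g ≤ √τ * gridNorm a b (τ * N) g := by
  have hsum := sum_range_endpoints_le_sum_range_mul
    (w := fun j => g (gridNode a b (τ * N) j) ^ 2) (fun _ => sq_nonneg _) hτ N
  simp only [gridNode_mul_mul a b N hτ] at hsum
  rw [gridNorm_eq_sqrt_sum_gridNode, gridNorm_eq_sqrt_sum_gridNode, ← Real.sqrt_mul τ.cast_nonneg,
    ← mul_gridStep_mul a b N hτ, ← mul_assoc, mul_div_assoc (τ : ℝ)]
  refine Real.sqrt_le_sqrt (mul_le_mul_of_nonneg_left hsum ?_)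
  exact mul_nonneg τ.cast_nonneg (div_nonneg (gridStep_nonneg hab _) zero_le_two)

theorem gridNorm_mul_le_sqrt_two_mul_gridNorm (hab : a ≤ b) (hτ : 1 ≤ τ)
    (hg : ∀ i < N, QuasiconvexOn ℝ (Set.Icc (gridNode a b N i) (gridNode a b N (i + 1))) |g|) :
    gridNorm a b (τ * N) g ≤ √2 * gridNorm a b N g := by
  have hsum := sum_range_mul_le_nsmul_sum_range_endpoints
    (w := fun j => g (gridNode a b (τ * N) j) ^ 2) (m := τ) (n := N) fun i hi k hk => by
      simpa only [gridNode_mul_mul a b N hτ] using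
        sq_le_sq_add_sq_of_quasiconvexOn_abs (hg i hi) (gridNode_mul_add_mem_Icc hab N hτ i hk)
  simp only [gridNode_mul_mul a b N hτ] at hsum
  rw [gridNorm_eq_sqrt_sum_gridNode, gridNorm_eq_sqrt_sum_gridNode, ← Real.sqrt_mul zero_le_two,
    ← mul_gridStep_mul a b N hτ]
  refine Real.sqrt_le_sqrt <|
    (mul_le_mul_of_nonneg_left hsum (div_nonneg (gridStep_nonneg hab _) zero_le_two)).trans_eq ?_
  rw [nsmul_eq_mul, Nat.cast_mul τ 2, Nat.cast_two]
  ring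

theorem gridNorm_mul_le_of_gridNorm_le (hab : a ≤ b) (hτ : 1 ≤ τ) {c : ℝ} (hc : 0 ≤ c)
    (hg : ∀ i < N, QuasiconvexOn ℝ (Set.Icc (gridNode a b N i) (gridNode a b N (i + 1))) |g|)
    (hgh : gridNorm a b N g ≤ c * gridNorm a b N h) :
    gridNorm a b (τ * N) g ≤ √(2 * τ) * c * gridNorm a b (τ * N) h :=
  calc gridNorm a b (τ * N) g
      ≤ √2 * gridNorm a b N g := gridNorm_mul_le_sqrt_two_mul_gridNorm hab hτ hg
    _ ≤ √2 * (c * gridNorm a b N h) := by gcongr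
    _ ≤ √2 * (c * (√τ * gridNorm a b (τ * N) h)) := by
        gcongr
        exact gridNorm_le_sqrt_mul_gridNorm_mul hab N hτ h
    _ = √(2 * τ) * c * gridNorm a b (τ * N) h := by
        rw [Real.sqrt_mul zero_le_two]
        ring

end Refinement

theorem stmt6_general {a b : ℝ} (hab : a ≤ b) {N τ : ℕ} (hτ : 1 ≤ τ)
    {f fCK fNTK : ℝ → ℝ} {β : ℝ} (hβ : β < 1)
    (htr1 : gridNorm a b N (f - fNTK) ≤ gridNorm a b N (f - fCK))
    (htr2 : gridNorm a b N (f - fCK) ≤ (1 / (1 - β)) * gridNorm a b N (f - fNTK))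
    (hCK : ∀ i < N,
      QuasiconvexOn ℝ (Set.Icc (gridNode a b N i) (gridNode a b N (i + 1))) |f - fCK|)
    (hNTK : ∀ i < N,
      QuasiconvexOn ℝ (Set.Icc (gridNode a b N i) (gridNode a b N (i + 1))) |f - fNTK|) :
    (√(2 * τ))⁻¹ * gridNorm a b (τ * N) (f - fNTK) ≤ gridNorm a b (τ * N) (f - fCK) ∧
      gridNorm a b (τ * N) (f - fCK) ≤
        (√(2 * τ) / (1 - β)) * gridNorm a b (τ * N) (f - fNTK) := by
  have hβ' : 0 < 1 - β := sub_pos.mpr hβ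
  constructor
  · rw [inv_mul_le_iff₀ (by positivity)]
    simpa only [mul_one] using
      gridNorm_mul_le_of_gridNorm_le hab hτ zero_le_one hNTK (htr1.trans_eq (one_mul _).symm)
  · rw [div_eq_mul_one_div]
    exact gridNorm_mul_le_of_gridNorm_le hab hτ (one_div_nonneg.mpr hβ'.le) hCK htr2

/-- Theorem 4.6 (monotone residuals): if the training-grid errors of the CK and NTK
approximants satisfy `‖f−f_NTK‖₀ ≤ ‖f−f_CK‖₀ ≤ (1/(1−β))‖f−f_NTK‖₀` and both residuals
are monotonic on every subinterval `[x_i, x_{i+1}]`, then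
`(2τ)^{−1/2} ‖f−f_NTK‖₁ ≤ ‖f−f_CK‖₁ ≤ (√(2τ)/(1−β)) ‖f−f_NTK‖₁`. -/
theorem stmt6 (a b : ℝ) (hab : a < b) (N τ : ℕ) (hN : 1 ≤ N) (hτ : 1 < τ)
    (f fCK fNTK : ℝ → ℝ) (β : ℝ) (hβ0 : 0 ≤ β) (hβ1 : β < 1)
    (htr1 : gridNorm a b N (f - fNTK) ≤ gridNorm a b N (f - fCK))
    (htr2 : gridNorm a b N (f - fCK) ≤ (1 / (1 - β)) * gridNorm a b N (f - fNTK))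
    (hmonoCK : ∀ i < N,
      MonotoneOn (f - fCK) (Set.Icc (a + i * ((b - a) / N)) (a + (i + 1) * ((b - a) / N))) ∨
      AntitoneOn (f - fCK) (Set.Icc (a + i * ((b - a) / N)) (a + (i + 1) * ((b - a) / N))))
    (hmonoNTK : ∀ i < N,
      MonotoneOn (f - fNTK) (Set.Icc (a + i * ((b - a) / N)) (a + (i + 1) * ((b - a) / N))) ∨
      AntitoneOn (f - fNTK) (Set.Icc (a + i * ((b - a) / N)) (a + (i + 1) * ((b - a) / N)))) :
    (Real.sqrt (2 * τ))⁻¹ * gridNorm a b (τ * N) (f - fNTK) ≤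
        gridNorm a b (τ * N) (f - fCK) ∧
      gridNorm a b (τ * N) (f - fCK) ≤
        (Real.sqrt (2 * τ) / (1 - β)) * gridNorm a b (τ * N) (f - fNTK) := by
  refine stmt6_general hab.le hτ.le hβ1 htr1 htr2 (fun i hi => ?_) (fun i hi => ?_) <;>
    refine quasiconvexOn_abs_of_monotoneOn_or_antitoneOn (convex_Icc _ _) ?_
  · simpa only [gridNode, Nat.cast_succ] using hmonoCK i hi
  · simpa only [gridNode, Nat.cast_succ] using hmonoNTK i hi
end

section
/- For all real numbers a and b, ln(1 + e^a) ≤ max{1, e^{a−b}} · ln(1 + e^b). -/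
theorem log_one_add_mul_le_mul_log_one_add {ρ x : ℝ} (hρ : 1 ≤ ρ) (hρx : 0 < 1 + ρ * x) :
    Real.log (1 + ρ * x) ≤ ρ * Real.log (1 + x) := by
  have hx : -1 < x := by nlinarith
  calc Real.log (1 + ρ * x)
      ≤ Real.log ((1 + x) ^ ρ) := Real.log_le_log hρx (one_add_mul_self_le_rpow_one_add hx.le hρ)
    _ = ρ * Real.log (1 + x) := Real.log_rpow (by linarith) ρ

theorem log_one_add_le_max_one_div_mul_log_one_add {x y : ℝ} (hx : 0 < x) (hy : -1 < y) :
    Real.log (1 + y) ≤ max 1 (y / x) * Real.log (1 + x) := by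
  have hyx : y ≤ max 1 (y / x) * x := (div_le_iff₀ hx).mp (le_max_right 1 (y / x))
  calc Real.log (1 + y)
      ≤ Real.log (1 + max 1 (y / x) * x) := Real.log_le_log (by linarith) (by linarith)
    _ ≤ max 1 (y / x) * Real.log (1 + x) :=
        log_one_add_mul_le_mul_log_one_add (le_max_left 1 (y / x)) (by linarith)

/-- For all real numbers `a` and `b`,
`ln(1 + e^a) ≤ max{1, e^{a−b}} · ln(1 + e^b)`. -/
theorem stmt10 (a b : ℝ) :
    Real.log (1 + Real.exp a) ≤ max 1 (Real.exp (a - b)) * Real.log (1 + Real.exp b) := by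
  rw [Real.exp_sub]
  exact log_one_add_le_max_one_div_mul_log_one_add (Real.exp_pos b)
    (neg_one_lt_zero.trans (Real.exp_pos a))
end
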